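/- arXiv:2605.19488 — 2 statements merged into one kernel-verified Lean document; each statement's English description precedes it below -/
import Mathlib

section
/- Let n ≥ 2, r ≥ 1 and q ≥ 1. If n prisoners do not have a winning strategy for r rooms with q states, then n+1 prisoners do not have a winning strategy for r rooms with q states. -/
namespace PrisonersGame

/-- A deterministic strategy for a prisoner: given the list of states observed
on previous visits and the state observed on the current visit, return the
state to leave the room in and whether to declare. -/
def Strategy : Type := List ℕ → ℕ → ℕ × Bool

/-- A strategy is valid for `q` states if, whenever all states observed so far
are among `0, …, q-1`, the state it leaves the room in is among `0, …, q-1`. -/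
def Strategy.ValidFor (q : ℕ) (σ : Strategy) : Prop :=
  ∀ (h : List ℕ) (s : ℕ), (∀ x ∈ h, x < q) → s < q → (σ h s).1 < q

/-- A schedule: at each time step, one prisoner is led into one room. -/
def Schedule (n r : ℕ) : Type := ℕ → Fin n × Fin r

/-- A schedule is fair if every prisoner is led into every room infinitely often. -/
def Schedule.Fair {n r : ℕ} (sched : Schedule n r) : Prop :=
  ∀ (p : Fin n) (room : Fin r), {t : ℕ | sched t = (p, room)}.Infinite

/-- The state of play just before step `t`: the current states of the rooms, and
the list of states observed so far by each prisoner. All rooms start in state `0`. -/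
def run {n r : ℕ} (strat : Fin n → Strategy) (sched : Schedule n r) :
    ℕ → (Fin r → ℕ) × (Fin n → List ℕ)
  | 0 => (fun _ => 0, fun _ => [])
  | t + 1 =>
      let prev := run strat sched t
      let p := (sched t).1
      let room := (sched t).2
      let obs := prev.1 room
      (Function.update prev.1 room (strat p (prev.2 p) obs).1,
        Function.update prev.2 p (prev.2 p ++ [obs]))

/-- The prisoner visiting at step `t` declares during that visit. -/
def declaresAt {n r : ℕ} (strat : Fin n → Strategy) (sched : Schedule n r)
    (t : ℕ) : Prop :=
  (strat (sched t).1 ((run strat sched t).2 (sched t).1)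
      ((run strat sched t).1 (sched t).2)).2 = true

/-- Every prisoner has visited every room by step `t` (inclusive). -/
def allVisitedBy {n r : ℕ} (sched : Schedule n r) (t : ℕ) : Prop :=
  ∀ (p : Fin n) (room : Fin r), ∃ s ≤ t, sched s = (p, room)

/-- A strategy profile is winning if, for every fair schedule, some prisoner
eventually declares, and no prisoner ever declares at a time before every
prisoner has visited every room. -/
def Winning {n r : ℕ} (strat : Fin n → Strategy) : Prop :=
  ∀ sched : Schedule n r, sched.Fair →
    (∃ t, declaresAt strat sched t) ∧
    ∀ t, declaresAt strat sched t → allVisitedBy sched t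

/-- `n` prisoners have a winning strategy for `r` rooms with `q` states. -/
def HasWinningStrategy (n r q : ℕ) : Prop :=
  ∃ strat : Fin n → Strategy, (∀ p, (strat p).ValidFor q) ∧ Winning (n := n) (r := r) strat

/-- `n` prisoners have a symmetric winning strategy (all prisoners use the
same strategy) for `r` rooms with `q` states. -/
def HasSymmetricWinningStrategy (n r q : ℕ) : Prop :=
  ∃ σ : Strategy, σ.ValidFor q ∧ Winning (n := n) (r := r) (fun _ => σ)

end PrisonersGame

/-!
Fewer prisoners can imitate more: every prisoner plays two roles of the larger game, one after
the other, at each visit to a room. With `n` prisoners, one of them plays two of the `n + 1` roles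
and each of the others plays a single role twice. A schedule of the small game thus becomes a
schedule of the large game in which every step is doubled, and a declaration made in the latter is
correct in the former because a role visits only the rooms visited by the prisoner playing it.
-/

namespace PrisonersGame

open Function Set

section Visits

variable {ι : Type*} {q : ℕ} {strat : ι → Strategy} {A : Set ι} {a : ι}
  {e : Bool → ι} {x y : (ι → List ℕ) × ℕ}

/-- Whether prisoner `a` declares on visiting a room, the histories and the state of that room
being given by `x`. -/
def declaresOnVisit (strat : ι → Strategy) (a : ι) (x : (ι → List ℕ) × ℕ) : Bool :=
  (strat a (x.1 a) x.2).2

/-- `x` and `y` have the same room state, and the same histories for the prisoners in `A`: they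
are indistinguishable to those prisoners. -/
def AgreeOn (A : Set ι) (x y : (ι → List ℕ) × ℕ) : Prop :=
  EqOn x.1 y.1 A ∧ x.2 = y.2

lemma AgreeOn.declaresOnVisit_eq (h : AgreeOn A x y) (ha : a ∈ A) :
    declaresOnVisit strat a x = declaresOnVisit strat a y := by
  simp only [declaresOnVisit, h.1 ha, h.2]

variable [DecidableEq ι]

/-- The effect of a visit by prisoner `a` on a pair `(histories, room state)`, where the second
component is the state of the visited room. -/
def visit (strat : ι → Strategy) (a : ι) (x : (ι → List ℕ) × ℕ) : (ι → List ℕ) × ℕ :=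
  (update x.1 a (x.1 a ++ [x.2]), (strat a (x.1 a) x.2).1)

/-- Successive visits of the roles `e false` and `e true` to the same room. The roles may
coincide. -/
def visitTwice (strat : ι → Strategy) (e : Bool → ι) (x : (ι → List ℕ) × ℕ) :
    (ι → List ℕ) × ℕ :=
  visit strat (e true) (visit strat (e false) x)

/-- The histories of the roles `e false` and `e true`, reconstructed from the list of states
observed by a prisoner who plays both at every visit. Other roles have empty histories. -/
def roleHistories (strat : ι → Strategy) (e : Bool → ι) (h : List ℕ) : ι → List ℕ :=
  h.foldl (fun H s => (visitTwice strat e (H, s)).1) fun _ => []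

/-- The strategy of a prisoner who plays the roles `e false` and `e true` in succession at every
visit, declaring as soon as one of them does. -/
def merge (strat : ι → Strategy) (e : Bool → ι) : Strategy := fun h s =>
  let x := (roleHistories strat e h, s)
  ((visitTwice strat e x).2,
    declaresOnVisit strat (e false) x || declaresOnVisit strat (e true) (visit strat (e false) x))

lemma roleHistories_append_singleton (strat : ι → Strategy) (e : Bool → ι) (h : List ℕ) (s : ℕ) :
    roleHistories strat e (h ++ [s]) = (visitTwice strat e (roleHistories strat e h, s)).1 := by
  simp only [roleHistories, List.foldl_append, List.foldl_cons, List.foldl_nil]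

/-- All recorded observations, as well as the current room state, are among `0, …, q - 1`. -/
def StatesLT (q : ℕ) (x : (ι → List ℕ) × ℕ) : Prop :=
  (∀ j, ∀ s ∈ x.1 j, s < q) ∧ x.2 < q

lemma StatesLT.visit (hx : StatesLT q x) (ha : (strat a).ValidFor q) :
    StatesLT q (visit strat a x) := by
  refine ⟨fun j s hs => ?_, ha _ _ (hx.1 a) hx.2⟩
  obtain rfl | hj := eq_or_ne j a
  · simp only [PrisonersGame.visit, update_self, List.mem_append, List.mem_singleton] at hs
    obtain hs | rfl := hs
    exacts [hx.1 j s hs, hx.2]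
  · simp only [PrisonersGame.visit, update_of_ne hj] at hs
    exact hx.1 j s hs

lemma StatesLT.visitTwice (hx : StatesLT q x) (he : ∀ i, (strat (e i)).ValidFor q) :
    StatesLT q (visitTwice strat e x) :=
  (hx.visit (he false)).visit (he true)

lemma roleHistories_lt (he : ∀ i, (strat (e i)).ValidFor q) {h : List ℕ} (hh : ∀ s ∈ h, s < q) :
    ∀ j, ∀ s ∈ roleHistories strat e h j, s < q := by
  induction h using List.reverseRecOn with
  | nil => simp [roleHistories]
  | append_singleton h s ih =>
    simp only [List.forall_mem_append, List.forall_mem_singleton] at hh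
    rw [roleHistories_append_singleton]
    exact (StatesLT.visitTwice ⟨ih hh.1, hh.2⟩ he).1

lemma validFor_merge (he : ∀ i, (strat (e i)).ValidFor q) : (merge strat e).ValidFor q :=
  fun _ _ hh hs => (StatesLT.visitTwice ⟨roleHistories_lt he hh, hs⟩ he).2

lemma AgreeOn.visit (h : AgreeOn A x y) (ha : a ∈ A) :
    AgreeOn A (visit strat a x) (visit strat a y) := by
  refine ⟨fun j hj => ?_, by simp only [PrisonersGame.visit, h.1 ha, h.2]⟩
  simp only [PrisonersGame.visit, update_apply, h.1 ha, h.1 hj, h.2]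

lemma AgreeOn.visitTwice (h : AgreeOn A x y) (he : ∀ i, e i ∈ A) :
    AgreeOn A (visitTwice strat e x) (visitTwice strat e y) :=
  (h.visit (he false)).visit (he true)

lemma visitTwice_fst_of_ne {j : ι} (hj : ∀ i, j ≠ e i) : (visitTwice strat e x).1 j = x.1 j := by
  simp only [visitTwice, visit, update_of_ne (hj _)]

end Visits

section Split

variable {m n r : ℕ} {strat : Fin m → Strategy} {role : Fin n → Bool → Fin m}
  {owner : Fin m → Fin n} {sched : Schedule n r}

/-- The histories, and the state of the room visited at step `t`, just before step `t`. -/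
def view (strat : Fin n → Strategy) (sched : Schedule n r) (t : ℕ) : (Fin n → List ℕ) × ℕ :=
  ((run strat sched t).2, (run strat sched t).1 (sched t).2)

lemma run_succ (strat : Fin n → Strategy) (sched : Schedule n r) (t : ℕ) :
    run strat sched (t + 1) =
      (update (run strat sched t).1 (sched t).2 (visit strat (sched t).1 (view strat sched t)).2,
        (visit strat (sched t).1 (view strat sched t)).1) :=
  rfl

/-- The schedule in which each visit of a prisoner `p` is replaced by a visit of `role p false`
followed by a visit of `role p true`. Step `t` becomes the steps `Nat.bit false t = 2 * t` and
`Nat.bit true t = 2 * t + 1`. -/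
def split (role : Fin n → Bool → Fin m) (sched : Schedule n r) : Schedule m r := fun u =>
  (role (sched u.div2).1 u.bodd, (sched u.div2).2)

lemma split_bit (role : Fin n → Bool → Fin m) (sched : Schedule n r) (i : Bool) (t : ℕ) :
    split role sched (Nat.bit i t) = (role (sched t).1 i, (sched t).2) := by
  simp only [split, Nat.bodd_bit, Nat.div2_bit]

lemma Schedule.Fair.split (hrole : ∀ j, ∃ i, role (owner j) i = j) (hsched : sched.Fair) :
    (split role sched).Fair := by
  intro j c
  obtain ⟨i, hi⟩ := hrole j
  have bit_injective : Injective (Nat.bit i) := fun s t hst => by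
    simpa only [Nat.div2_bit] using congrArg Nat.div2 hst
  refine ((hsched (owner j) c).image bit_injective.injOn).mono ?_
  rintro _ ⟨t, ht : sched t = (owner j, c), rfl⟩
  simp only [mem_ofPred_eq, split_bit, ht, hi]

lemma allVisitedBy_of_split (howner : ∀ p i, owner (role p i) = p) {u : ℕ}
    (hu : allVisitedBy (split role sched) u) : allVisitedBy sched u.div2 := by
  intro p c
  obtain ⟨s, hsu, hs⟩ := hu (role p false) c
  obtain ⟨hp, hc⟩ := Prod.ext_iff.mp hs
  refine ⟨s.div2, ?_, Prod.ext ?_ hc⟩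
  · simpa only [Nat.div2_val] using Nat.div_le_div_right hsu
  · simpa only [split, howner] using congrArg owner hp

lemma view_split_bit_true (t : ℕ) :
    view strat (split role sched) (Nat.bit true t) =
      visit strat (role (sched t).1 false) (view strat (split role sched) (Nat.bit false t)) := by
  have bit_true : Nat.bit true t = Nat.bit false t + 1 := rfl
  simp only [view, split_bit]
  simp only [bit_true, run_succ, view, split_bit, update_self]

lemma run_split_bit_false_succ (t : ℕ) :
    run strat (split role sched) (Nat.bit false (t + 1)) =
      let x := visitTwice strat (role (sched t).1)
        (view strat (split role sched) (Nat.bit false t))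
      (update (run strat (split role sched) (Nat.bit false t)).1 (sched t).2 x.2, x.1) := by
  have bit_succ : Nat.bit false (t + 1) = Nat.bit true t + 1 := rfl
  have bit_true : Nat.bit true t = Nat.bit false t + 1 := rfl
  rw [bit_succ, run_succ, view_split_bit_true, bit_true, run_succ, ← bit_true]
  simp only [split_bit, update_idem, visitTwice]

/-- The position `S` of the large game is the one that the prisoners of the small game, in position
`R`, have in mind: the rooms are in the same states, and the prisoner playing a role has correctly
reconstructed its history. Here `owner j` is the prisoner who plays role `j`. -/
def Simulates (strat : Fin m → Strategy) (role : Fin n → Bool → Fin m) (owner : Fin m → Fin n)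
    (S : (Fin r → ℕ) × (Fin m → List ℕ)) (R : (Fin r → ℕ) × (Fin n → List ℕ)) : Prop :=
  S.1 = R.1 ∧ ∀ p, EqOn S.2 (roleHistories strat (role p) (R.2 p)) (owner ⁻¹' {p})

lemma Simulates.agreeOn {S : (Fin r → ℕ) × (Fin m → List ℕ)} {R : (Fin r → ℕ) × (Fin n → List ℕ)}
    (h : Simulates strat role owner S R) (p : Fin n) (c : Fin r) :
    AgreeOn (owner ⁻¹' {p}) (S.2, S.1 c) (roleHistories strat (role p) (R.2 p), R.1 c) :=
  ⟨h.2 p, congrFun h.1 c⟩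

lemma simulates_run_split (howner : ∀ p i, owner (role p i) = p) (t : ℕ) :
    Simulates strat role owner (run strat (split role sched) (Nat.bit false t))
      (run (fun p => merge strat (role p)) sched t) := by
  induction t with
  | zero => exact ⟨rfl, fun _ _ _ => rfl⟩
  | succ t ih =>
    have agree := (ih.agreeOn (sched t).1 (sched t).2).visitTwice (strat := strat)
      (howner (sched t).1)
    rw [run_split_bit_false_succ]
    simp only [view, split_bit, run_succ, visit]
    refine ⟨by rw [agree.2, ih.1]; rfl, fun p => ?_⟩
    obtain rfl | hp := eq_or_ne p (sched t).1
    · simpa only [update_self, roleHistories_append_singleton] using agree.1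
    · intro j hj
      have hj_ne (i : Bool) : j ≠ role (sched t).1 i := by
        rintro rfl
        exact hp (hj.symm.trans (howner _ i))
      simpa only [update_of_ne hp, visitTwice_fst_of_ne hj_ne] using ih.2 p hj

lemma declaresAt_merge_iff (howner : ∀ p i, owner (role p i) = p) (t : ℕ) :
    declaresAt (fun p => merge strat (role p)) sched t ↔
      ∃ i, declaresAt strat (split role sched) (Nat.bit i t) := by
  have declaresAt_split (i : Bool) : declaresAt strat (split role sched) (Nat.bit i t) ↔
      declaresOnVisit strat (role (sched t).1 i)
        (view strat (split role sched) (Nat.bit i t)) = true := by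
    simp only [declaresAt, declaresOnVisit, view, split_bit]
  have agree := (simulates_run_split (strat := strat) (sched := sched) howner t).agreeOn
    (sched t).1 (sched t).2
  have mem_fibre := howner (sched t).1
  rw [Bool.exists_bool, declaresAt_split, declaresAt_split, view_split_bit_true]
  simp only [view, split_bit]
  rw [agree.declaresOnVisit_eq (mem_fibre false),
    (agree.visit (mem_fibre false)).declaresOnVisit_eq (mem_fibre true)]
  exact Bool.or_eq_true_iff

theorem Winning.merge (howner : ∀ p i, owner (role p i) = p)
    (hrole : ∀ j, ∃ i, role (owner j) i = j) (hw : Winning (r := r) strat) :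
    Winning (r := r) fun p => merge strat (role p) := by
  intro sched hsched
  obtain ⟨⟨u, hu⟩, hvisited⟩ := hw _ (hsched.split hrole)
  refine ⟨⟨u.div2, (declaresAt_merge_iff howner _).2 ⟨u.bodd, ?_⟩⟩, fun t ht => ?_⟩
  · rwa [Nat.bit_bodd_div2]
  · obtain ⟨i, hi⟩ := (declaresAt_merge_iff howner t).1 ht
    simpa only [Nat.div2_bit] using allVisitedBy_of_split howner (hvisited _ hi)

theorem HasWinningStrategy.of_succ {q : ℕ} [NeZero n] (h : HasWinningStrategy (n + 1) r q) :
    HasWinningStrategy n r q := by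
  obtain ⟨strat, hvalid, hw⟩ := h
  let role (p : Fin n) (i : Bool) : Fin (n + 1) := if i ∧ p = 0 then Fin.last n else p.castSucc
  let owner : Fin (n + 1) → Fin n := Fin.lastCases 0 id
  have howner (p : Fin n) (i : Bool) : owner (role p i) = p := by
    by_cases hp : i ∧ p = 0 <;> simp [role, owner, hp]
  have hrole (j : Fin (n + 1)) : ∃ i, role (owner j) i = j := by
    cases j using Fin.lastCases with
    | last => exact ⟨true, by simp [role, owner]⟩
    | cast p => exact ⟨false, by simp [role, owner]⟩
  exact ⟨fun p => merge strat (role p), fun p => validFor_merge fun i => hvalid (role p i),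
    hw.merge howner hrole⟩

end Split

end PrisonersGame

open PrisonersGame in
theorem monotone_in_prisoners_general {m n r q : ℕ} (hn : 1 ≤ n) (hnm : n ≤ m)
    (h : ¬ HasWinningStrategy n r q) : ¬ HasWinningStrategy m r q := by
  induction m, hnm using Nat.le_induction with
  | base => exact h
  | succ m hnm ih =>
    have : NeZero m := ⟨by omega⟩
    exact fun hm => ih hm.of_succ

open PrisonersGame in
/-- If `n` prisoners do not have a winning strategy for `r` rooms with `q`
states, then neither do `n + 1` prisoners. -/
theorem monotone_in_prisoners (n r q : ℕ) (hn : 2 ≤ n) (hr : 1 ≤ r) (hq : 1 ≤ q)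
    (h : ¬ HasWinningStrategy n r q) : ¬ HasWinningStrategy (n + 1) r q :=
  monotone_in_prisoners_general (by omega) (Nat.le_succ n) h
end

section
/- For n = 5 prisoners, every number of states q ≥ 3, and every number of rooms r ≥ 1 with r ≠ 3, the prisoners have a winning strategy for r rooms with q states. -/
/-!
In all the protocols, prisoner `0` first turns every room from `0` to `1` and then one room to `2`,
so that it has visited every room before anyone else acts.

With at most two rooms, the room in state `2` becomes the channel through which the others report:
having seen all the rooms, a prisoner turns this room from `2` to `0`, and prisoner `0` counts the
reports and resets the room to `2`. If there is a second room, its state `1` tells it from the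
channel.

With at least four rooms, prisoner `1` turns all rooms to `2` and then one of them to `0`, and
prisoner `2` turns all rooms but one to `0` and then one of them to `1`. The remaining prisoners,
the twins, race for this room. The winner turns rooms from `0` to `2` until a single `0` is left
and turns two rooms to `1`. If the loser takes the first of these two rooms, it mistakes itself
for the winner, but then it finds at most two rooms in state `0`, which is not enough to get to
the point where the winner stops paying attention to state `1`. The winner never sees a `1` after
the race, so a second `1` tells the loser that it has lost. It then turns all rooms to `1` and
declares.
-/

namespace PrisonersGame

open Function

/-- What the analysis of a play keeps track of: the state of each room, the stage each prisoner has
reached in its protocol, and the visits that have advanced some prisoner. -/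
structure Config (n r : ℕ) where
  room : Fin r → ℕ
  stage : Fin n → ℕ
  seen : Set (Fin n × Fin r)

namespace Config

variable {n r : ℕ}

/-- The configuration at the start of the game. -/
def init (n r : ℕ) : Config n r := ⟨fun _ => 0, fun _ => 0, ∅⟩

/-- The configuration after prisoner `p` visits room `ρ`, advances to stage `k` and leaves the room
in state `w`. -/
def move (c : Config n r) (p : Fin n) (ρ : Fin r) (k w : ℕ) : Config n r :=
  ⟨update c.room ρ w, update c.stage p k, insert (p, ρ) c.seen⟩

/-- The number of rooms in state `i`. -/
def count (c : Config n r) (i : ℕ) : ℕ := (Finset.univ.filter fun ρ => c.room ρ = i).card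

/-- Prisoner `p` has visited every room that is currently in state `i`. -/
def Surveyed (c : Config n r) (p : Fin n) (i : ℕ) : Prop := ∀ ρ, c.room ρ = i → (p, ρ) ∈ c.seen

/-- Prisoner `p` has visited every room. -/
def SeenAll (c : Config n r) (p : Fin n) : Prop := ∀ ρ, (p, ρ) ∈ c.seen

end Config

/-- A strategy profile presented by automata. On observing state `s`, a prisoner at stage `k` either
idles (`next = none`), leaving the room as it is, or advances to stage `k'` and leaves the room in
state `w` (`next = some (k', w)`). It declares once it is at stage `final`. -/
structure Protocol (n q : ℕ) where
  next : Fin n → ℕ → ℕ → Option (ℕ × ℕ)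
  final : ℕ
  lt_of_next {p k s k' w} : next p k s = some (k', w) → k < k'
  le_final_of_next {p k s k' w} : next p k s = some (k', w) → k' ≤ final
  write_lt_of_next {p k s k' w} : next p k s = some (k', w) → w < q

namespace Protocol

variable {n r q : ℕ} (P : Protocol n q)

/-- The new stage and the state written by a prisoner at stage `k` observing state `s`. -/
def act (p : Fin n) (k s : ℕ) : ℕ × ℕ := (P.next p k s).getD (k, s)

/-- The stage of a prisoner after a history of observations. -/
def stageAfter (p : Fin n) (h : List ℕ) : ℕ := h.foldl (fun k s => (P.act p k s).1) 0

/-- The strategy profile described by a protocol. -/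
def strategy (p : Fin n) : Strategy := fun h s =>
  ((P.act p (P.stageAfter p h) s).2, decide ((P.act p (P.stageAfter p h) s).1 = P.final))

theorem strategy_validFor {q' : ℕ} (hq : q ≤ q') (p : Fin n) : (P.strategy p).ValidFor q' := by
  intro h s _ hs
  cases hnext : P.next p (P.stageAfter p h) s with
  | none => simpa only [strategy, act, hnext, Option.getD_none] using hs
  | some kw =>
    simpa only [strategy, act, hnext, Option.getD_some]
      using (P.write_lt_of_next hnext).trans_le hq

/-- The effect of a visit of prisoner `p` to room `ρ`. An idle visit is not recorded in `seen`, so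
that it does not change the configuration at all. -/
def visit (c : Config n r) (p : Fin n) (ρ : Fin r) : Config n r :=
  (P.next p (c.stage p) (c.room ρ)).elim c fun kw => c.move p ρ kw.1 kw.2

/-- The configuration just before step `t`. -/
def config (sched : Schedule n r) : ℕ → Config n r
  | 0 => Config.init n r
  | t + 1 => P.visit (config sched t) (sched t).1 (sched t).2

theorem visit_room (c : Config n r) (p : Fin n) (ρ : Fin r) :
    (P.visit c p ρ).room = update c.room ρ (P.act p (c.stage p) (c.room ρ)).2 := by
  cases h : P.next p (c.stage p) (c.room ρ) <;> simp [visit, act, h, Config.move]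

theorem visit_stage (c : Config n r) (p : Fin n) (ρ : Fin r) :
    (P.visit c p ρ).stage = update c.stage p (P.act p (c.stage p) (c.room ρ)).1 := by
  cases h : P.next p (c.stage p) (c.room ρ) <;> simp [visit, act, h, Config.move]

theorem visit_eq_or_move (c : Config n r) (p : Fin n) (ρ : Fin r) :
    P.visit c p ρ = c ∨ ∃ k w, P.next p (c.stage p) (c.room ρ) = some (k, w) ∧
      P.visit c p ρ = c.move p ρ k w := by
  cases h : P.next p (c.stage p) (c.room ρ) with
  | none => exact .inl (by rw [visit, h, Option.elim_none])
  | some kw => exact .inr ⟨kw.1, kw.2, rfl, by rw [visit, h, Option.elim_some]⟩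

theorem run_eq_config (sched : Schedule n r) (t : ℕ) :
    (run P.strategy sched t).1 = (P.config sched t).room ∧
      ∀ p, P.stageAfter p ((run P.strategy sched t).2 p) = (P.config sched t).stage p := by
  induction t with
  | zero => exact ⟨rfl, fun _ => rfl⟩
  | succ t ih =>
    obtain ⟨hroom, hstage⟩ := ih
    refine ⟨?_, fun p => ?_⟩
    · simp only [run, config, visit_room, strategy, hroom, hstage]
    · simp only [run, config, visit_stage, ← hroom, ← hstage]
      rcases eq_or_ne p (sched t).1 with rfl | hp
      · simp only [update_self, stageAfter, List.foldl_append, List.foldl_cons, List.foldl_nil]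
      · simp only [update_of_ne hp, hstage]

theorem declaresAt_iff (sched : Schedule n r) (t : ℕ) :
    declaresAt P.strategy sched t ↔ (P.config sched (t + 1)).stage (sched t).1 = P.final := by
  simp only [declaresAt, strategy, config, visit_stage, update_self, P.run_eq_config sched t,
    decide_eq_true_eq]

theorem exists_visit_of_mem_seen {sched : Schedule n r} {t : ℕ} {p : Fin n} {ρ : Fin r}
    (h : (p, ρ) ∈ (P.config sched t).seen) : ∃ s < t, sched s = (p, ρ) := by
  induction t with
  | zero => exact h.elim
  | succ t ih =>
    rcases P.visit_eq_or_move (P.config sched t) (sched t).1 (sched t).2 with hv | ⟨k, w, -, hv⟩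
    · rw [config, hv] at h
      exact (ih h).imp fun s hs => ⟨hs.1.trans t.lt_succ_self, hs.2⟩
    · rw [config, hv] at h
      rcases h with h | h
      · exact ⟨t, t.lt_succ_self, h.symm⟩
      · exact (ih h).imp fun s hs => ⟨hs.1.trans t.lt_succ_self, hs.2⟩

/-- An invariant strong enough to show that a protocol is winning: nobody is at the final stage too
early, and as long as nobody is at the final stage, someone can advance. -/
structure Invariant (Inv : Config n r → Prop) : Prop where
  init : Inv (Config.init n r)
  move {c p ρ k w} : Inv c → P.next p (c.stage p) (c.room ρ) = some (k, w) → Inv (c.move p ρ k w)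
  seenAll {c p} : Inv c → c.stage p = P.final → ∀ p', c.SeenAll p'
  progress {c} : Inv c → (∃ p, c.stage p = P.final) ∨
    ∃ p ρ k w, P.next p (c.stage p) (c.room ρ) = some (k, w)

theorem Invariant.inv_config {P : Protocol n q} {Inv : Config n r → Prop} (hInv : P.Invariant Inv)
    (sched : Schedule n r) (t : ℕ) : Inv (P.config sched t) := by
  induction t with
  | zero => exact hInv.init
  | succ t ih =>
    rw [config]
    rcases P.visit_eq_or_move (P.config sched t) (sched t).1 (sched t).2 with hv | ⟨k, w, hnext, hv⟩
    · rwa [hv]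
    · rw [hv]
      exact hInv.move ih hnext

theorem stage_config_le_final (sched : Schedule n r) (t : ℕ) (p : Fin n) :
    (P.config sched t).stage p ≤ P.final := by
  induction t with
  | zero => exact Nat.zero_le _
  | succ t ih =>
    rw [config]
    rcases P.visit_eq_or_move (P.config sched t) (sched t).1 (sched t).2 with hv | ⟨k, w, hnext, hv⟩
    · rwa [hv]
    · rw [hv, Config.move]
      rcases eq_or_ne p (sched t).1 with rfl | hp
      · simpa only [update_self] using P.le_final_of_next hnext
      · simpa only [update_of_ne hp] using ih

theorem sum_stage_lt_of_next {c : Config n r} {p : Fin n} {ρ : Fin r} {k w : ℕ}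
    (hnext : P.next p (c.stage p) (c.room ρ) = some (k, w)) :
    ∑ p', c.stage p' < ∑ p', (c.move p ρ k w).stage p' := by
  have hlt : c.stage < update c.stage p k := lt_update_self_iff.mpr (P.lt_of_next hnext)
  exact Fintype.sum_strictMono hlt

/-- The total stage never decreases and is bounded, and it increases with every advance. -/
theorem exists_config_eventually_eq (sched : Schedule n r) :
    ∃ T, ∀ t ≥ T, P.config sched t = P.config sched T := by
  let total (t : ℕ) : ℕ := ∑ p, (P.config sched t).stage p
  have hbdd : BddAbove (Set.range total) := by
    refine ⟨∑ _p : Fin n, P.final, ?_⟩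
    rintro _ ⟨t, rfl⟩
    exact Finset.sum_le_sum fun p _ => P.stage_config_le_final sched t p
  obtain ⟨T, hT⟩ := Nat.sSup_mem (Set.range_nonempty total) hbdd
  have hmax (t : ℕ) : total t ≤ total T := hT ▸ le_csSup hbdd ⟨t, rfl⟩
  refine ⟨T, fun t ht => Nat.le_induction rfl (fun t _ ih => ?_) t ht⟩
  rcases P.visit_eq_or_move (P.config sched t) (sched t).1 (sched t).2 with hv | ⟨k, w, hnext, hv⟩
  · rw [config, hv, ih]
  · have hlt : total T < total (t + 1) := by
      simpa only [total, config, ← ih, hv] using P.sum_stage_lt_of_next hnext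
    exact absurd (hmax (t + 1)) hlt.not_ge

theorem Invariant.winning {P : Protocol n q} {Inv : Config n r → Prop} (hInv : P.Invariant Inv) :
    Winning (n := n) (r := r) P.strategy := by
  intro sched hfair
  refine ⟨?_, fun t hdecl p ρ => ?_⟩
  · obtain ⟨T, hT⟩ := P.exists_config_eventually_eq sched
    rcases hInv.progress (hInv.inv_config sched T) with ⟨p, hp⟩ | ⟨p, ρ, k, w, hnext⟩
    · obtain ⟨t, ht, hTt⟩ := (hfair p (sched 0).2).exists_gt T
      have hpt : (sched t).1 = p := congrArg Prod.fst ht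
      exact ⟨t, by rw [declaresAt_iff, hT _ (by omega), hpt, hp]⟩
    · obtain ⟨t, ht, hTt⟩ := (hfair p ρ).exists_gt T
      have hmove : P.config sched (t + 1) = (P.config sched T).move p ρ k w := by
        rw [config, hT t hTt.le, show sched t = (p, ρ) from ht, visit, hnext, Option.elim_some]
      have hlt := P.sum_stage_lt_of_next hnext
      rw [← hmove, hT (t + 1) (by omega)] at hlt
      exact absurd hlt (lt_irrefl _)
  · rw [declaresAt_iff] at hdecl
    obtain ⟨s, hs, hvisit⟩ := P.exists_visit_of_mem_seen
      (hInv.seenAll (hInv.inv_config sched (t + 1)) hdecl p ρ)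
    exact ⟨s, Nat.lt_succ_iff.mp hs, hvisit⟩

theorem Invariant.hasWinningStrategy {P : Protocol n q} {Inv : Config n r → Prop}
    (hInv : P.Invariant Inv) {q' : ℕ} (hq : q ≤ q') : HasWinningStrategy n r q' :=
  ⟨P.strategy, P.strategy_validFor hq, hInv.winning⟩

end Protocol

namespace Config

variable {n r : ℕ} {c : Config n r} {p p' : Fin n} {ρ : Fin r} {i k w : ℕ}

theorem move_room : (c.move p ρ k w).room = update c.room ρ w := rfl

theorem move_room_apply (ρ' : Fin r) :
    (c.move p ρ k w).room ρ' = if ρ' = ρ then w else c.room ρ' := update_apply ..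

theorem move_stage_apply (p' : Fin n) :
    (c.move p ρ k w).stage p' = if p' = p then k else c.stage p' := update_apply ..

theorem mem_seen_move {x : Fin n × Fin r} :
    x ∈ (c.move p ρ k w).seen ↔ x = (p, ρ) ∨ x ∈ c.seen := Iff.rfl

theorem move_stage_self : (c.move p ρ k w).stage p = k := by
  simp only [move, update_self]

theorem move_stage_of_ne (h : p' ≠ p) : (c.move p ρ k w).stage p' = c.stage p' := by
  simp only [move, update_of_ne h]

theorem count_move (c : Config n r) (p : Fin n) (ρ : Fin r) (k w i : ℕ) :
    (c.move p ρ k w).count i + (if c.room ρ = i then 1 else 0) =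
      c.count i + (if w = i then 1 else 0) := by
  have count_eq (f : Fin r → ℕ) : (Finset.univ.filter fun ρ' => f ρ' = i).card =
      (if f ρ = i then 1 else 0) + ∑ ρ' ∈ Finset.univ.erase ρ, if f ρ' = i then 1 else 0 := by
    rw [Finset.card_filter, ← Finset.add_sum_erase _ _ (Finset.mem_univ ρ)]
  have hrest : ∑ ρ' ∈ Finset.univ.erase ρ, (if update c.room ρ w ρ' = i then 1 else 0) =
      ∑ ρ' ∈ Finset.univ.erase ρ, if c.room ρ' = i then 1 else 0 :=
    Finset.sum_congr rfl fun ρ' h => by rw [update_of_ne (Finset.ne_of_mem_erase h)]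
  rw [count, count, move_room, count_eq, count_eq, hrest, update_self]
  omega

theorem count_pos (h : c.room ρ = i) : 0 < c.count i :=
  Finset.card_pos.mpr ⟨ρ, Finset.mem_filter.mpr ⟨Finset.mem_univ ρ, h⟩⟩

theorem exists_room_eq (h : 0 < c.count i) : ∃ ρ, c.room ρ = i := by
  obtain ⟨ρ, hρ⟩ := Finset.card_pos.mp h
  exact ⟨ρ, (Finset.mem_filter.mp hρ).2⟩

theorem exists_room_ne (h : c.count i < r) : ∃ ρ, c.room ρ ≠ i := by
  by_contra! hall
  simp [count, hall] at h

theorem room_eq_or_eq {j : ℕ} (hij : i ≠ j) (hcount : c.count i + c.count j = r) (ρ : Fin r) :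
    c.room ρ = i ∨ c.room ρ = j := by
  have hdisj : Disjoint (Finset.univ.filter fun ρ => c.room ρ = i)
      (Finset.univ.filter fun ρ => c.room ρ = j) :=
    Finset.disjoint_filter.mpr fun _ _ hi hj => hij (hi.symm.trans hj)
  have hcard : (Finset.univ.filter fun ρ => c.room ρ = i ∨ c.room ρ = j).card =
      Fintype.card (Fin r) := by
    rw [Finset.filter_or, Finset.card_union_of_disjoint hdisj, Fintype.card_fin]
    exact hcount
  exact (Finset.mem_filter_univ ρ).mp
    (((Finset.card_eq_iff_eq_univ _).mp hcard).ge (Finset.mem_univ ρ))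

theorem SeenAll.move (h : c.SeenAll p') : (c.move p ρ k w).SeenAll p' :=
  fun ρ' => Set.mem_insert_of_mem _ (h ρ')

theorem Surveyed.move (h : c.Surveyed p' i) (hw : w = i → p' = p ∨ c.room ρ = i) :
    (c.move p ρ k w).Surveyed p' i := by
  intro ρ' hρ'
  rw [move_room] at hρ'
  rcases eq_or_ne ρ' ρ with rfl | hne
  · rw [update_self] at hρ'
    rcases hw hρ' with rfl | hi
    · exact Set.mem_insert _ _
    · exact Set.mem_insert_of_mem _ (h ρ' hi)
  · rw [update_of_ne hne] at hρ'
    exact Set.mem_insert_of_mem _ (h ρ' hρ')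

theorem eq_of_count_eq_one {ρ' : Fin r} (hcount : c.count i = 1) (h : c.room ρ = i)
    (h' : c.room ρ' = i) : ρ' = ρ := by
  obtain ⟨a, ha⟩ := Finset.card_eq_one.mp hcount
  have hmem {b : Fin r} (hb : c.room b = i) : b = a :=
    Finset.mem_singleton.mp (ha ▸ Finset.mem_filter.mpr ⟨Finset.mem_univ b, hb⟩)
  rw [hmem h, hmem h']

theorem surveyed_move_of_count_eq_one (hcount : (c.move p ρ k w).count w = 1) :
    (c.move p ρ k w).Surveyed p w := by
  intro ρ' hρ'
  rw [eq_of_count_eq_one hcount (by rw [move_room, update_self]) hρ']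
  exact Set.mem_insert _ _

theorem Surveyed.seenAll (h : c.Surveyed p i) (hcount : c.count i = r) : c.SeenAll p := by
  have huniv : (Finset.univ.filter fun ρ => c.room ρ = i) = Finset.univ :=
    (Finset.card_eq_iff_eq_univ _).mp (by rw [Fintype.card_fin]; exact hcount)
  exact fun ρ => h ρ ((Finset.mem_filter_univ ρ).mp (huniv.ge (Finset.mem_univ ρ)))

theorem Surveyed.seenAll_move (h : c.Surveyed p i) (hcount : c.count i + 1 = r)
    (hne : c.room ρ ≠ i) : (c.move p ρ k w).SeenAll p := by
  have hmove : (c.move p ρ k i).count i = r := by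
    have := c.count_move p ρ k i i
    rw [if_neg hne, if_pos rfl] at this
    omega
  have hsurveyed : (c.move p ρ k i).Surveyed p i := h.move fun _ => .inl rfl
  exact hsurveyed.seenAll hmove

end Config

open Config

section Opening

variable {n r : ℕ} [NeZero n] {c : Config n r} {ρ : Fin r} {k w : ℕ}

/-- The moves of prisoner `0` in the opening: it turns a room in state `0` to state `1` at each of
the stages `0, …, r - 1`, and then a room in state `1` to state `2`. -/
def openerNext (r k s : ℕ) : Option (ℕ × ℕ) :=
  if k < r ∧ s = 0 then some (k + 1, 1)
  else if k = r ∧ s = 1 then some (r + 1, 2)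
  else none

/-- The opening is under way: prisoner `0` is turning the rooms from `0` to `1`, and the others wait
for state `2` to appear. -/
structure Opening (c : Config n r) : Prop where
  stage_zero_le : c.stage 0 ≤ r
  stage_eq_zero {p} : p ≠ 0 → c.stage p = 0
  count_zero : c.count 0 + c.stage 0 = r
  count_one : c.count 1 = c.stage 0
  count_two : c.count 2 = 0
  surveyed : c.Surveyed 0 1

/-- The opening has just ended: one room is in state `2` and the others in state `1`. -/
structure Opened (c : Config n r) : Prop where
  stage_zero : c.stage 0 = r + 1
  stage_eq_zero {p} : p ≠ 0 → c.stage p = 0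
  count_zero : c.count 0 = 0
  count_one : c.count 1 + 1 = r
  count_two : c.count 2 = 1
  seenAll : c.SeenAll 0

theorem opening_init : Opening (Config.init n r) where
  stage_zero_le := Nat.zero_le r
  stage_eq_zero _ := rfl
  count_zero := by simp [Config.init, count]
  count_one := by simp [Config.init, count]
  count_two := by simp [Config.init, count]
  surveyed ρ hρ := absurd hρ zero_ne_one

theorem Opening.move (h : Opening c) (hnext : openerNext r (c.stage 0) (c.room ρ) = some (k, w)) :
    Opening (c.move 0 ρ k w) ∨ Opened (c.move 0 ρ k w) := by
  have hmoves : c.stage 0 < r ∧ c.room ρ = 0 ∧ k = c.stage 0 + 1 ∧ w = 1 ∨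
      c.stage 0 = r ∧ c.room ρ = 1 ∧ k = r + 1 ∧ w = 2 := by grind [openerNext]
  have hstage := @h.stage_eq_zero
  have hsurveyed := h.surveyed
  cases h
  have hcount := c.count_move 0 ρ k w
  have hstage_zero : (c.move 0 ρ k w).stage 0 = k := move_stage_self
  have hstage_eq_zero {p : Fin n} (hp : p ≠ 0) : (c.move 0 ρ k w).stage p = 0 :=
    (move_stage_of_ne hp).trans (hstage hp)
  rcases hmoves with ⟨_, hρ, rfl, rfl⟩ | ⟨_, hρ, rfl, rfl⟩
  · exact .inl ⟨by grind, hstage_eq_zero, by grind, by grind, by grind,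
      hsurveyed.move fun _ => .inl rfl⟩
  · exact .inr ⟨by grind, hstage_eq_zero, by grind, by grind, by grind,
      (hsurveyed.seenAll (by grind)).move⟩

theorem Opening.progress (hr : 1 ≤ r) (h : Opening c) :
    ∃ ρ k w, openerNext r (c.stage 0) (c.room ρ) = some (k, w) := by
  cases h
  by_cases hlt : c.stage 0 < r
  · obtain ⟨ρ, hρ⟩ : ∃ ρ, c.room ρ = 0 := exists_room_eq (by omega)
    exact ⟨ρ, c.stage 0 + 1, 1, by grind [openerNext]⟩
  · obtain ⟨ρ, hρ⟩ : ∃ ρ, c.room ρ = 1 := exists_room_eq (by omega)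
    exact ⟨ρ, r + 1, 2, by grind [openerNext]⟩

end Opening

section FewRooms

variable {n r : ℕ}

/-- The moves of the followers when there are at most two rooms. A follower waits for a room in
state `2`, then for one in state `1` if there is a second room, and then turns a room in state `2`
to state `0`. -/
def followerNext (r k s : ℕ) : Option (ℕ × ℕ) :=
  if k = 0 ∧ s = 2 then some (1, 2)
  else if 1 ≤ k ∧ k < r ∧ s = 1 then some (k + 1, 1)
  else if k = r ∧ s = 2 then some (r + 1, 0)
  else none

/-- The moves of the leader when there are at most two rooms: after the opening, it turns a room in
state `0` to state `2` once for each of the `n` followers. -/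
def leaderNext (n r k s : ℕ) : Option (ℕ × ℕ) :=
  if r < k ∧ k ≤ r + n ∧ s = 0 then some (k + 1, 2) else openerNext r k s

/-- The protocol for at most two rooms, with prisoner `0` as the leader. -/
def fewRooms (n r : ℕ) : Protocol (n + 1) 3 where
  next p := if p = 0 then leaderNext n r else followerNext r
  final := r + n + 1
  lt_of_next {p k s k' w} h := by
    split_ifs at h
    · grind [leaderNext, openerNext]
    · grind [followerNext]
  le_final_of_next {p k s k' w} h := by
    split_ifs at h
    · grind [leaderNext, openerNext]
    · grind [followerNext]
  write_lt_of_next {p k s k' w} h := by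
    split_ifs at h
    · grind [leaderNext, openerNext]
    · grind [followerNext]

theorem fewRooms_next_zero : (fewRooms n r).next 0 = leaderNext n r := by
  simp only [fewRooms, if_true]

theorem fewRooms_next {p : Fin (n + 1)} (hp : p ≠ 0) : (fewRooms n r).next p = followerNext r := by
  simp only [fewRooms, if_neg hp]

theorem leaderNext_of_le {k s : ℕ} (hk : k ≤ r) : leaderNext n r k s = openerNext r k s :=
  if_neg fun h => h.1.not_ge hk

/-- The followers who have completed their protocol. -/
def finished (c : Config (n + 1) r) : Finset (Fin (n + 1)) :=
  Finset.univ.filter fun p => p ≠ 0 ∧ c.stage p = r + 1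

/-- The phase following the opening when there are at most two rooms: the followers report to the
leader through room `K`, which is in state `0` while a report is pending and else in state `2`. -/
structure Reporting (K : Fin r) (c : Config (n + 1) r) : Prop where
  room_eq_one {ρ} : ρ ≠ K → c.room ρ = 1
  room_eq : c.room K = 0 ∨ c.room K = 2
  lt_stage_zero : r < c.stage 0
  seenAll_zero : c.SeenAll 0
  stage_le {p} : p ≠ 0 → c.stage p ≤ r + 1
  card_finished : (finished c).card + (r + 1) = c.stage 0 + if c.room K = 0 then 1 else 0
  mem_seen_key {p} : p ≠ 0 → 1 ≤ c.stage p → (p, K) ∈ c.seen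
  mem_seen_of_ne {p ρ} : p ≠ 0 → 2 ≤ c.stage p → ρ ≠ K → (p, ρ) ∈ c.seen

variable {c : Config (n + 1) r} {p : Fin (n + 1)} {K ρ : Fin r} {k w : ℕ}

theorem Opened.exists_reporting (h : Opened c) : ∃ K, Reporting K c := by
  obtain ⟨K, hK⟩ : ∃ K, c.room K = 2 := exists_room_eq (by rw [h.count_two]; exact Nat.one_pos)
  have hfinished : finished c = ∅ := by
    ext p
    have := @h.stage_eq_zero p
    simp only [finished, Finset.mem_filter_univ, Finset.notMem_empty, iff_false]
    omega
  refine ⟨K, fun {ρ} hρ => ?_, .inr hK, by rw [h.stage_zero]; omega, h.seenAll, fun hp => ?_, ?_,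
    fun hp h1 => ?_, fun hp h2 => ?_⟩
  · have hrooms := room_eq_or_eq (by decide : 1 ≠ 2) (by rw [h.count_two, h.count_one]) ρ
    exact hrooms.resolve_right fun h2 => hρ (eq_of_count_eq_one h.count_two hK h2)
  · simp only [h.stage_eq_zero hp, zero_le]
  · simp [hfinished, hK, h.stage_zero]
  · simp [h.stage_eq_zero hp] at h1
  · simp [h.stage_eq_zero hp] at h2

theorem finished_move_of_ne (h : p ≠ 0 → k ≠ r + 1 ∧ c.stage p ≠ r + 1) :
    finished (c.move p ρ k w) = finished c := by
  ext p'
  simp only [finished, Finset.mem_filter_univ]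
  rcases eq_or_ne p' p with rfl | hp
  · rw [move_stage_self]
    tauto
  · rw [move_stage_of_ne hp]

theorem finished_move (hp : p ≠ 0) :
    finished (c.move p ρ (r + 1) w) = insert p (finished c) := by
  ext p'
  simp only [finished, Finset.mem_filter_univ, Finset.mem_insert]
  rcases eq_or_ne p' p with rfl | hne
  · rw [move_stage_self]
    tauto
  · rw [move_stage_of_ne hne]
    tauto

theorem finished_subset (c : Config (n + 1) r) : finished c ⊆ Finset.univ.erase 0 := by
  intro p hp
  simpa using ((Finset.mem_filter_univ p).mp hp).1

theorem card_finished_le (c : Config (n + 1) r) : (finished c).card ≤ n := by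
  simpa using Finset.card_le_card (finished_subset c)

theorem Reporting.seenAll (hr : 1 ≤ r) (h : Reporting K c) (hp : p ∈ finished c) : c.SeenAll p := by
  obtain ⟨hp, hstage⟩ := (Finset.mem_filter_univ p).mp hp
  intro ρ
  rcases eq_or_ne ρ K with rfl | hρ
  · exact h.mem_seen_key hp (by omega)
  · exact h.mem_seen_of_ne hp (by omega) hρ

theorem mem_finished_of_card_eq (h : (finished c).card = n) (hp : p ≠ 0) : p ∈ finished c := by
  have heq : finished c = Finset.univ.erase 0 :=
    Finset.eq_of_subset_of_card_le (finished_subset c) (by simp [h])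
  simpa [heq] using hp

theorem Reporting.leader_move (h : Reporting K c)
    (hnext : leaderNext n r (c.stage 0) (c.room ρ) = some (k, w)) :
    Reporting K (c.move 0 ρ k w) := by
  have hlt := h.lt_stage_zero
  obtain ⟨hρ, rfl, rfl⟩ : c.room ρ = 0 ∧ k = c.stage 0 + 1 ∧ w = 2 := by
    grind [leaderNext, openerNext]
  obtain rfl : ρ = K := by_contra fun hne => by simp [h.room_eq_one hne] at hρ
  have hfinished := finished_move_of_ne (c := c) (ρ := ρ) (k := c.stage 0 + 1) (w := 2)
    (fun hp => absurd rfl hp)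
  cases h
  constructor
  all_goals grind [move_room_apply, move_stage_apply, mem_seen_move, SeenAll]

theorem Reporting.follower_move (hr : r ≤ 2) (h : Reporting K c) (hp : p ≠ 0)
    (hnext : followerNext r (c.stage p) (c.room ρ) = some (k, w)) :
    Reporting K (c.move p ρ k w) := by
  have hmoves : c.stage p = 0 ∧ ρ = K ∧ k = 1 ∧ w = c.room ρ ∨
      c.stage p = 1 ∧ r = 2 ∧ ρ ≠ K ∧ k = 2 ∧ w = c.room ρ ∨
      c.stage p = r ∧ ρ = K ∧ c.room K = 2 ∧ k = r + 1 ∧ w = 0 := by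
    have hkey := h.room_eq
    have hother := @h.room_eq_one ρ
    unfold followerNext at hnext
    split_ifs at hnext
    all_goals grind
  have hr' : r = 1 → ρ = K := by omega
  cases h
  by_cases hk : k = r + 1
  · have hfinished := hk ▸ finished_move (c := c) (ρ := ρ) (w := w) hp
    have hnotMem : p ∉ finished c := fun h => by
      have := ((Finset.mem_filter_univ p).mp h).2
      grind
    have := Finset.card_insert_of_notMem hnotMem
    constructor
    all_goals grind [move_room_apply, move_stage_apply, mem_seen_move, SeenAll]
  · have hfinished := finished_move_of_ne (c := c) (ρ := ρ) (k := k) (w := w) (p := p)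
      (fun _ => by grind)
    constructor
    all_goals grind [move_room_apply, move_stage_apply, mem_seen_move, SeenAll]

theorem Reporting.progress_of_zero (h : Reporting K c) (hK : c.room K = 0) :
    ∃ w k, leaderNext n r (c.stage 0) (c.room K) = some (k, w) := by
  have hcard := card_finished_le c
  have hfinished := h.card_finished
  have hlt := h.lt_stage_zero
  exact ⟨2, c.stage 0 + 1, by grind [leaderNext]⟩

theorem Reporting.follower_progress (hr : r ≤ 2) (h : Reporting K c) (hK : c.room K = 2)
    (hp : p ≠ 0) (hstage : c.stage p ≠ r + 1) :
    ∃ ρ k w, followerNext r (c.stage p) (c.room ρ) = some (k, w) := by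
  have hle := h.stage_le hp
  rcases (by omega : c.stage p = 0 ∨ c.stage p = 1 ∧ r = 2 ∨ c.stage p = r) with h0 | ⟨h1, rfl⟩ | hr
  · exact ⟨K, 1, 2, by grind [followerNext]⟩
  · obtain ⟨ρ, hρ⟩ := exists_ne K
    have := h.room_eq_one hρ
    exact ⟨ρ, 2, 1, by grind [followerNext]⟩
  · by_cases h0 : c.stage p = 0
    · exact ⟨K, 1, 2, by grind [followerNext]⟩
    · exact ⟨K, r + 1, 0, by grind [followerNext]⟩

theorem Reporting.progress (hr : r ≤ 2) (h : Reporting K c) :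
    c.stage 0 = r + n + 1 ∨
      ∃ p ρ k w, (fewRooms n r).next p (c.stage p) (c.room ρ) = some (k, w) := by
  rcases h.room_eq with hK | hK
  · obtain ⟨w, k, hnext⟩ := h.progress_of_zero hK
    exact .inr ⟨0, K, k, w, by rw [fewRooms_next_zero, hnext]⟩
  by_cases hall : ∀ p ≠ 0, c.stage p = r + 1
  · have hfinished : finished c = Finset.univ.erase 0 := by
      ext p
      simpa [finished] using hall p
    have hcard := h.card_finished
    rw [hfinished, hK] at hcard
    left
    simp at hcard
    omega
  · push Not at hall
    obtain ⟨p, hp, hstage⟩ := hall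
    obtain ⟨ρ, k, w, hnext⟩ := h.follower_progress hr hK hp hstage
    exact .inr ⟨p, ρ, k, w, by rw [fewRooms_next hp, hnext]⟩

theorem Reporting.seenAll_of_final (hr : 1 ≤ r) (h : Reporting K c)
    (hfinal : c.stage p = r + n + 1) (p' : Fin (n + 1)) : c.SeenAll p' := by
  rcases eq_or_ne p' 0 with rfl | hp'
  · exact h.seenAll_zero
  have hp : p = 0 := by
    by_contra hp
    have := h.stage_le hp
    have := (Fin.pos_iff_ne_zero.mpr hp)
    omega
  have hcard : (finished c).card = n := by
    have hle := card_finished_le c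
    have hfinished := h.card_finished
    rw [← hp, hfinal] at hfinished
    split_ifs at hfinished <;> omega
  exact h.seenAll hr (mem_finished_of_card_eq hcard hp')

theorem fewRooms_invariant (hr : 1 ≤ r) (hr2 : r ≤ 2) :
    (fewRooms n r).Invariant fun c : Config (n + 1) r =>
      Opening c ∨ ∃ K, Reporting K c where
  init := .inl opening_init
  move {c p ρ k w} h hnext := by
    rcases h with h | ⟨K, h⟩
    · obtain rfl : p = 0 := by_contra fun hp => by
        have hstage := h.stage_eq_zero hp
        have hcount := h.count_two
        have hpos := @count_pos _ _ c ρ 2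
        rw [fewRooms_next hp] at hnext
        grind [followerNext]
      rw [fewRooms_next_zero, leaderNext_of_le h.stage_zero_le] at hnext
      rcases h.move hnext with h | h
      · exact .inl h
      · exact .inr h.exists_reporting
    · right
      rcases eq_or_ne p 0 with rfl | hp
      · exact ⟨K, h.leader_move (by rwa [fewRooms_next_zero] at hnext)⟩
      · exact ⟨K, h.follower_move hr2 hp (by rwa [fewRooms_next hp] at hnext)⟩
  seenAll {c p} h hfinal := by
    rcases h with h | ⟨K, h⟩
    · have hle := h.stage_zero_le
      have hzero := @h.stage_eq_zero p
      grind [fewRooms]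
    · exact h.seenAll_of_final hr hfinal
  progress {c} h := by
    rcases h with h | ⟨K, h⟩
    · obtain ⟨ρ, k, w, hnext⟩ := h.progress hr
      exact .inr ⟨0, ρ, k, w, by rw [fewRooms_next_zero, leaderNext_of_le h.stage_zero_le, hnext]⟩
    · exact (h.progress hr2).imp_left fun hfinal => ⟨0, hfinal⟩

theorem hasWinningStrategy_of_rooms_le_two (hr : 1 ≤ r) (hr2 : r ≤ 2) {q : ℕ} (hq : 3 ≤ q) :
    HasWinningStrategy (n + 1) r q :=
  (fewRooms_invariant hr hr2).hasWinningStrategy hq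

end FewRooms

section ManyRooms

variable {r : ℕ}

/-- The moves of prisoner `1` when there are at least four rooms: having seen the first room in
state `2`, it turns the other rooms from `1` to `2`, and finally one room from `2` to `0`. -/
def secondNext (r k s : ℕ) : Option (ℕ × ℕ) :=
  if k = 0 ∧ s = 2 then some (1, 2)
  else if 1 ≤ k ∧ k < r ∧ s = 1 then some (k + 1, 2)
  else if k = r ∧ s = 2 then some (r + 1, 0)
  else none

/-- The moves of prisoner `2` when there are at least four rooms: having seen states `2` and `0` in
turn, it turns all rooms but one from `2` to `0`, sees the remaining room in state `2`, and finally
turns one room from `0` to `1`. -/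
def thirdNext (r k s : ℕ) : Option (ℕ × ℕ) :=
  if k = 0 ∧ s = 2 then some (1, 2)
  else if k = 1 ∧ s = 0 then some (2, 0)
  else if 2 ≤ k ∧ k < r ∧ s = 2 then some (k + 1, 0)
  else if k = r ∧ s = 2 then some (r + 1, 2)
  else if k = r + 1 ∧ s = 0 then some (r + 2, 1)
  else none

/-- The moves of prisoners `3` and `4` when there are at least four rooms. Having seen states `2`
and `0` in turn, a twin takes a room in state `1` back to `0` (stage `3`) and, taking itself for
the winner of the race for the first such room, sees a `2`, turns rooms from `0` to `2` until one
is left, sees that one (stage `r + 3`), and turns two rooms from `2` to `1` (stage `r + 5`). If it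
sees state `1` before that, it knows that it has lost, and it turns all rooms to `1`, being at
stage `3 * r + j` when there are `j` such rooms. -/
def twinNext (r k s : ℕ) : Option (ℕ × ℕ) :=
  if k = 0 ∧ s = 2 then some (1, 2)
  else if k = 1 ∧ s = 0 then some (2, 0)
  else if k = 2 ∧ s = 1 then some (3, 0)
  else if k = 3 ∧ s = 2 then some (4, 2)
  else if 4 ≤ k ∧ k < r + 2 ∧ s = 0 then some (k + 1, 2)
  else if k = r + 2 ∧ s = 0 then some (r + 3, 0)
  else if r + 3 ≤ k ∧ k < r + 5 ∧ s = 2 then some (k + 1, 1)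
  else if 3 ≤ k ∧ k < r + 3 ∧ s = 1 then some (3 * r + 1, 1)
  else if 3 * r < k ∧ k < 4 * r ∧ s ≠ 1 then some (k + 1, 1)
  else none

/-- The moves of the five prisoners when there are at least four rooms. -/
def manyNext (r : ℕ) : Fin 5 → ℕ → ℕ → Option (ℕ × ℕ)
  | 0 => openerNext r
  | 1 => secondNext r
  | 2 => thirdNext r
  | 3 | 4 => twinNext r

theorem manyNext_bounds (hr : 4 ≤ r) {p : Fin 5} {k s k' w : ℕ}
    (h : manyNext r p k s = some (k', w)) : k < k' ∧ k' ≤ 4 * r ∧ w < 3 := by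
  match p, h with
  | 0, h =>
    change openerNext r k s = some (k', w) at h
    grind (splits := 20) [openerNext]
  | 1, h =>
    change secondNext r k s = some (k', w) at h
    grind (splits := 20) [secondNext]
  | 2, h =>
    change thirdNext r k s = some (k', w) at h
    grind (splits := 20) [thirdNext]
  | 3, h | 4, h =>
    change twinNext r k s = some (k', w) at h
    grind (splits := 20) [twinNext]

theorem manyNext_zero_eq_none (s : ℕ) : manyNext r 0 (r + 1) s = none := by
  change openerNext r (r + 1) s = none
  grind [openerNext]

theorem manyNext_one_eq_none (s : ℕ) : manyNext r 1 (r + 1) s = none := by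
  change secondNext r (r + 1) s = none
  grind [secondNext]

theorem manyNext_two_eq_none (s : ℕ) : manyNext r 2 (r + 2) s = none := by
  change thirdNext r (r + 2) s = none
  grind [thirdNext]

theorem manyNext_of_le_one (hr : 4 ≤ r) {p : Fin 5} {k s k' w : ℕ} (hp : 1 < p) (hk : k ≤ 1)
    (h : manyNext r p k s = some (k', w)) :
    (k = 0 ∧ s = 2 ∨ k = 1 ∧ s = 0) ∧ k' = k + 1 ∧ w = s := by
  match p, hp, h with
  | 2, _, h =>
    change thirdNext r k s = some (k', w) at h
    grind (splits := 20) [thirdNext]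
  | 3, _, h | 4, _, h =>
    change twinNext r k s = some (k', w) at h
    grind (splits := 20) [twinNext]

theorem manyNext_of_two_lt {p : Fin 5} (hp : 2 < p) : manyNext r p = twinNext r := by
  match p, hp with
  | 3, _ | 4, _ => rfl

theorem twinNext_of_le_two (hr : 4 ≤ r) {k s k' w : ℕ} (hk : k ≤ 2)
    (h : twinNext r k s = some (k', w)) :
    k' = k + 1 ∧ (k' ≤ 2 ∧ w = s ∨ k = 2 ∧ s = 1 ∧ w = 0) := by
  grind (splits := 20) [twinNext]

theorem twinNext_of_signaling (hr : 4 ≤ r) {k s k' w : ℕ} (hk : r + 3 ≤ k) (hk' : k ≤ r + 5)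
    (h : twinNext r k s = some (k', w)) : k < r + 5 ∧ s = 2 ∧ k' = k + 1 ∧ w = 1 := by
  grind (splits := 20) [twinNext]

/-- The protocol for five prisoners and at least four rooms. -/
def manyRooms (hr : 4 ≤ r) : Protocol 5 3 where
  next := manyNext r
  final := 4 * r
  lt_of_next h := (manyNext_bounds hr h).1
  le_final_of_next h := (manyNext_bounds hr h).2.1
  write_lt_of_next h := (manyNext_bounds hr h).2.2

/-- The phase in which prisoner `1` turns the rooms from `1` to `2`. -/
structure SecondPhase (c : Config 5 r) : Prop where
  stage_zero : c.stage 0 = r + 1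
  stage_one_le : c.stage 1 ≤ r
  stage_le {p} : 1 < p → c.stage p ≤ 1
  count_zero : c.count 0 = 0
  count_one : c.count 1 + c.count 2 = r
  count_two : c.count 2 = max 1 (c.stage 1)
  seenAll_zero : c.SeenAll 0
  surveyed : 1 ≤ c.stage 1 → c.Surveyed 1 2

/-- The phase in which prisoner `2` turns the rooms from `2` to `0`. -/
structure ThirdPhase (c : Config 5 r) : Prop where
  stage_zero : c.stage 0 = r + 1
  stage_one : c.stage 1 = r + 1
  stage_two_le : c.stage 2 ≤ r + 1
  stage_le {p} : 2 < p → c.stage p ≤ 2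
  count_one : c.count 1 = 0
  count_two : c.count 0 + c.count 2 = r
  count_zero : c.count 0 = max 1 (min (c.stage 2 - 1) (r - 1))
  seenAll_zero : c.SeenAll 0
  seenAll_one : c.SeenAll 1
  surveyed : 2 ≤ c.stage 2 → c.Surveyed 2 0
  seenAll_two : c.stage 2 = r + 1 → c.SeenAll 2

variable {c : Config 5 r} {p : Fin 5} {ρ : Fin r} {k w : ℕ}

theorem Opened.secondPhase (h : Opened c) : SecondPhase c := by
  have hstage := @h.stage_eq_zero
  have hseen := h.seenAll
  cases h
  exact ⟨by omega, by simp [hstage], fun hp => by simp [hstage (Fin.ne_zero_of_lt hp)], by omega,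
    by omega, by simp [*], hseen, by simp [hstage]⟩

theorem SecondPhase.move_one (hr : 4 ≤ r) (h : SecondPhase c)
    (hnext : secondNext r (c.stage 1) (c.room ρ) = some (k, w)) :
    SecondPhase (c.move 1 ρ k w) ∨ ThirdPhase (c.move 1 ρ k w) := by
  have hmoves : c.stage 1 = 0 ∧ c.room ρ = 2 ∧ k = 1 ∧ w = 2 ∨
      1 ≤ c.stage 1 ∧ c.stage 1 < r ∧ c.room ρ = 1 ∧ k = c.stage 1 + 1 ∧ w = 2 ∨
      c.stage 1 = r ∧ c.room ρ = 2 ∧ k = r + 1 ∧ w = 0 := by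
    grind (splits := 20) [secondNext]
  have hcount := c.count_move 1 ρ k w
  have hsurveyed := h.surveyed
  cases h
  rcases hmoves with ⟨_, hρ, rfl, rfl⟩ | ⟨_, _, hρ, rfl, rfl⟩ | ⟨_, hρ, rfl, rfl⟩
  · left
    constructor
    any_goals grind [move_stage_apply, SeenAll.move]
    exact fun _ => surveyed_move_of_count_eq_one (by grind)
  · left
    constructor
    any_goals grind [move_stage_apply, SeenAll.move]
    exact fun _ => (hsurveyed (by omega)).move fun _ => .inl rfl
  · right
    have := (hsurveyed (by omega)).seenAll (by omega)
    constructor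
    all_goals grind [move_stage_apply, SeenAll.move]

theorem SecondPhase.move_of_one_lt (hr : 4 ≤ r) (h : SecondPhase c) (hp : 1 < p)
    (hnext : manyNext r p (c.stage p) (c.room ρ) = some (k, w)) :
    SecondPhase (c.move p ρ k w) := by
  obtain ⟨hmoves, rfl, rfl⟩ := manyNext_of_le_one hr hp (h.stage_le hp) hnext
  have hcount := c.count_move p ρ (c.stage p + 1) (c.room ρ)
  have hpos := @count_pos _ _ c ρ 0
  have hsurveyed := h.surveyed
  cases h
  constructor
  any_goals grind [move_stage_apply, SeenAll.move]
  rw [move_stage_of_ne hp.ne]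
  exact fun hstage => (hsurveyed hstage).move fun _ => .inr (by grind)

theorem SecondPhase.progress (h : SecondPhase c) :
    ∃ ρ k w, secondNext r (c.stage 1) (c.room ρ) = some (k, w) := by
  cases h
  by_cases hstage : 1 ≤ c.stage 1 ∧ c.stage 1 < r
  · obtain ⟨ρ, hρ⟩ : ∃ ρ, c.room ρ = 1 := exists_room_eq (by omega)
    exact ⟨ρ, c.stage 1 + 1, 2, by grind [secondNext]⟩
  · obtain ⟨ρ, hρ⟩ : ∃ ρ, c.room ρ = 2 := exists_room_eq (by omega)
    by_cases h0 : c.stage 1 = 0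
    · exact ⟨ρ, 1, 2, by grind [secondNext]⟩
    · exact ⟨ρ, r + 1, 0, by grind [secondNext]⟩

/-- The configurations in which prisoners `0`, `1` and `2` are done, where `X` and `Y` are the twins
in either order. -/
structure Twins (X Y : Fin 5) (c : Config 5 r) : Prop where
  eq_or_eq : X = 3 ∧ Y = 4 ∨ X = 4 ∧ Y = 3
  stage_zero : c.stage 0 = r + 1
  stage_one : c.stage 1 = r + 1
  stage_two : c.stage 2 = r + 2
  seenAll_zero : c.SeenAll 0
  seenAll_one : c.SeenAll 1
  seenAll_two : c.SeenAll 2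

/-- The twins race for the only room in state `1`. -/
structure Race (X Y : Fin 5) (c : Config 5 r) : Prop extends Twins X Y c where
  stage_left_le : c.stage X ≤ 2
  stage_right_le : c.stage Y ≤ 2
  count : c.count 0 + 2 = r
  count_one : c.count 1 = 1
  count_two : c.count 2 = 1

theorem ThirdPhase.move_two (hr : 4 ≤ r) (h : ThirdPhase c)
    (hnext : thirdNext r (c.stage 2) (c.room ρ) = some (k, w)) :
    ThirdPhase (c.move 2 ρ k w) ∨ Race 3 4 (c.move 2 ρ k w) := by
  have hmoves : c.stage 2 = 0 ∧ c.room ρ = 2 ∧ k = 1 ∧ w = 2 ∨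
      c.stage 2 = 1 ∧ c.room ρ = 0 ∧ k = 2 ∧ w = 0 ∨
      2 ≤ c.stage 2 ∧ c.stage 2 < r ∧ c.room ρ = 2 ∧ k = c.stage 2 + 1 ∧ w = 0 ∨
      c.stage 2 = r ∧ c.room ρ = 2 ∧ k = r + 1 ∧ w = 2 ∨
      c.stage 2 = r + 1 ∧ c.room ρ = 0 ∧ k = r + 2 ∧ w = 1 := by
    grind (splits := 20) [thirdNext]
  have hcount := c.count_move 2 ρ k w
  have hsurveyed := h.surveyed
  cases h
  rcases hmoves with ⟨_, hρ, rfl, rfl⟩ | ⟨_, hρ, rfl, rfl⟩ | ⟨_, _, hρ, rfl, rfl⟩ |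
    ⟨_, hρ, rfl, rfl⟩ | ⟨_, hρ, rfl, rfl⟩
  · left
    constructor
    all_goals grind [move_stage_apply, SeenAll.move]
  · left
    constructor
    any_goals grind [move_stage_apply, SeenAll.move]
    exact fun _ => surveyed_move_of_count_eq_one (by grind)
  · left
    constructor
    any_goals grind [move_stage_apply, SeenAll.move]
    exact fun _ => (hsurveyed (by omega)).move fun _ => .inl rfl
  · left
    have hseen : (c.move 2 ρ (r + 1) 2).SeenAll 2 :=
      (hsurveyed (by omega)).seenAll_move (by omega) (by omega)
    have hsurveyed' : (c.move 2 ρ (r + 1) 2).Surveyed 2 0 := fun ρ' _ => hseen ρ'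
    constructor
    all_goals grind [move_stage_apply, SeenAll.move]
  · right
    constructor
    constructor
    all_goals grind [move_stage_apply, SeenAll.move]

theorem ThirdPhase.move_of_two_lt (hr : 4 ≤ r) (h : ThirdPhase c) (hp : 2 < p)
    (hnext : manyNext r p (c.stage p) (c.room ρ) = some (k, w)) :
    ThirdPhase (c.move p ρ k w) := by
  have hpos := @count_pos _ _ c ρ 1
  rw [manyNext_of_two_lt hp] at hnext
  obtain ⟨hk, rfl⟩ : k ≤ 2 ∧ w = c.room ρ := by
    have := twinNext_of_le_two hr (h.stage_le hp) hnext
    have := h.count_one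
    omega
  have hcount := c.count_move p ρ k (c.room ρ)
  have hsurveyed := h.surveyed
  cases h
  constructor
  any_goals grind [move_stage_apply, SeenAll.move]
  rw [move_stage_of_ne hp.ne]
  exact fun hstage => (hsurveyed hstage).move fun _ => .inr (by grind)

theorem ThirdPhase.progress (hr : 4 ≤ r) (h : ThirdPhase c) :
    ∃ ρ k w, thirdNext r (c.stage 2) (c.room ρ) = some (k, w) := by
  cases h
  obtain ⟨ρ, hρ⟩ : ∃ ρ, c.room ρ = 0 := exists_room_eq (by omega)
  obtain ⟨ρ', hρ'⟩ : ∃ ρ, c.room ρ = 2 := exists_room_eq (by omega)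
  rcases (by omega : c.stage 2 = 0 ∨ c.stage 2 = 1 ∨ 2 ≤ c.stage 2 ∧ c.stage 2 < r ∨
    c.stage 2 = r ∨ c.stage 2 = r + 1) with h0 | h1 | h2 | hr' | hr'
  · exact ⟨ρ', 1, 2, by grind [thirdNext]⟩
  · exact ⟨ρ, 2, 0, by grind [thirdNext]⟩
  · exact ⟨ρ', c.stage 2 + 1, 0, by grind [thirdNext]⟩
  · exact ⟨ρ', r + 1, 2, by grind [thirdNext]⟩
  · exact ⟨ρ, r + 2, 1, by grind [thirdNext]⟩

section Twins

/-- Twin `X` has won the race and takes all the rooms but one from `0` to `2`. -/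
structure Lead (X Y : Fin 5) (c : Config 5 r) : Prop extends Twins X Y c where
  stage_left_ge : 3 ≤ c.stage X
  stage_left_le : c.stage X ≤ r + 2
  stage_right_le : c.stage Y ≤ 2
  count : c.count 0 + c.count 2 = r
  count_one : c.count 1 = 0
  count_two : c.count 2 = max 1 (c.stage X - 3)
  surveyed : 4 ≤ c.stage X → c.Surveyed X 2

/-- Twin `X` is turning two rooms from `2` to `1`, and twin `Y` has not taken any of them back to
`0` yet. -/
structure Signal (X Y : Fin 5) (c : Config 5 r) : Prop extends Twins X Y c where
  stage_left_le : c.stage X ≤ r + 5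
  stage_right_le : c.stage Y ≤ 2
  count : c.count 1 + c.count 2 + 1 = r
  count_zero : c.count 0 = 1
  count_one : c.count 1 + (r + 3) = c.stage X
  seenAll_left : c.SeenAll X

/-- Twin `Y` has taken one room in state `1` back to `0` and does not know yet that it has lost.
There are too few rooms in state `0` for it to mistake itself for the winner up to the end. -/
structure Chase (X Y : Fin 5) (c : Config 5 r) : Prop extends Twins X Y c where
  stage_left_le : c.stage X ≤ r + 5
  stage_right_ge : 3 ≤ c.stage Y
  stage_right_le : c.stage Y ≤ 6
  count : c.count 0 + c.count 1 + c.count 2 = r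
  count_zero : c.count 0 = min 2 (6 - c.stage Y)
  count_one : c.count 1 + (r + 4) = c.stage X
  seenAll_left : c.SeenAll X

/-- Twin `Y` knows that twin `X` has won and is turning all the rooms to `1`. -/
structure Finish (X Y : Fin 5) (c : Config 5 r) : Prop extends Twins X Y c where
  stage_left : c.stage X = r + 5
  stage_right_le : c.stage Y ≤ 4 * r
  count_one_pos : 1 ≤ c.count 1
  count_one : c.count 1 + 3 * r = c.stage Y
  seenAll_left : c.SeenAll X
  surveyed : c.Surveyed Y 1

variable {X Y : Fin 5}

theorem Twins.symm (h : Twins X Y c) : Twins Y X c where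
  __ := h
  eq_or_eq := h.eq_or_eq.symm.imp And.symm And.symm

theorem Twins.two_lt_left (h : Twins X Y c) : 2 < X := by
  rcases h.eq_or_eq with ⟨rfl, -⟩ | ⟨rfl, -⟩ <;> decide

theorem Twins.two_lt_right (h : Twins X Y c) : 2 < Y := h.symm.two_lt_left

theorem Twins.right_ne (h : Twins X Y c) : Y ≠ X := by
  rcases h.eq_or_eq with ⟨rfl, rfl⟩ | ⟨rfl, rfl⟩ <;> decide

theorem Twins.move (h : Twins X Y c) (hp : 2 < p) : Twins X Y (c.move p ρ k w) where
  eq_or_eq := h.eq_or_eq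
  stage_zero := (move_stage_of_ne (by omega)).trans h.stage_zero
  stage_one := (move_stage_of_ne (by omega)).trans h.stage_one
  stage_two := (move_stage_of_ne (by omega)).trans h.stage_two
  seenAll_zero := h.seenAll_zero.move
  seenAll_one := h.seenAll_one.move
  seenAll_two := h.seenAll_two.move

theorem Twins.eq_or_eq_of_manyNext (h : Twins X Y c) {s : ℕ}
    (hnext : manyNext r p (c.stage p) s = some (k, w)) : p = X ∨ p = Y := by
  match p, hnext with
  | 0, hnext => simp [h.stage_zero, manyNext_zero_eq_none] at hnext
  | 1, hnext => simp [h.stage_one, manyNext_one_eq_none] at hnext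
  | 2, hnext => simp [h.stage_two, manyNext_two_eq_none] at hnext
  | 3, _ | 4, _ =>
    have := h.eq_or_eq
    omega

theorem Twins.seenAll (h : Twins X Y c) (hX : c.SeenAll X) (hY : c.SeenAll Y) (p : Fin 5) :
    c.SeenAll p := by
  have hXY := h.eq_or_eq
  cases h
  match p with
  | 0 | 1 | 2 => assumption
  | 3 | 4 => rcases hXY with ⟨rfl, rfl⟩ | ⟨rfl, rfl⟩ <;> assumption

theorem Race.symm (h : Race X Y c) : Race Y X c where
  __ := h
  toTwins := h.toTwins.symm
  stage_left_le := h.stage_right_le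
  stage_right_le := h.stage_left_le

theorem Race.move_left (hr : 4 ≤ r) (h : Race X Y c)
    (hnext : twinNext r (c.stage X) (c.room ρ) = some (k, w)) :
    Race X Y (c.move X ρ k w) ∨ Lead X Y (c.move X ρ k w) := by
  have hcount := c.count_move X ρ k w
  have htwins : Twins X Y (c.move X ρ k w) := h.toTwins.move h.two_lt_left
  have hne := h.right_ne
  obtain ⟨rfl, hmoves⟩ := twinNext_of_le_two hr h.stage_left_le hnext
  cases h
  rcases hmoves with ⟨hk, rfl⟩ | ⟨hk, hρ, rfl⟩
  · left
    constructor
    all_goals grind [move_stage_apply]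
  · right
    constructor
    all_goals grind [move_stage_apply]

theorem exists_twinNext_of_le_two (h : c.stage p ≤ 2) (h0 : 0 < c.count 0) (h1 : 0 < c.count 1)
    (h2 : 0 < c.count 2) : ∃ ρ k w, twinNext r (c.stage p) (c.room ρ) = some (k, w) := by
  rcases (by omega : c.stage p = 0 ∨ c.stage p = 1 ∨ c.stage p = 2) with hk | hk | hk
  · obtain ⟨ρ, hρ⟩ := exists_room_eq h2
    exact ⟨ρ, 1, 2, by simp [twinNext, hk, hρ]⟩
  · obtain ⟨ρ, hρ⟩ := exists_room_eq h0
    exact ⟨ρ, 2, 0, by simp [twinNext, hk, hρ]⟩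
  · obtain ⟨ρ, hρ⟩ := exists_room_eq h1
    exact ⟨ρ, 3, 0, by simp [twinNext, hk, hρ]⟩

theorem Race.progress (hr : 4 ≤ r) (h : Race X Y c) :
    ∃ ρ k w, twinNext r (c.stage X) (c.room ρ) = some (k, w) := by
  have hle := h.stage_left_le
  cases h
  exact exists_twinNext_of_le_two hle (by omega) (by omega) (by omega)

theorem Lead.move_left (hr : 4 ≤ r) (h : Lead X Y c)
    (hnext : twinNext r (c.stage X) (c.room ρ) = some (k, w)) :
    Lead X Y (c.move X ρ k w) ∨ Signal X Y (c.move X ρ k w) := by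
  have hpos := @count_pos _ _ c ρ 1
  have hmoves : c.stage X = 3 ∧ c.room ρ = 2 ∧ k = 4 ∧ w = 2 ∨
      4 ≤ c.stage X ∧ c.stage X < r + 2 ∧ c.room ρ = 0 ∧ k = c.stage X + 1 ∧ w = 2 ∨
      c.stage X = r + 2 ∧ c.room ρ = 0 ∧ k = r + 3 ∧ w = 0 := by
    cases h
    grind (splits := 20) [twinNext]
  have hcount := c.count_move X ρ k w
  have htwins : Twins X Y (c.move X ρ k w) := h.toTwins.move h.two_lt_left
  have hne := h.right_ne
  have hsurveyed := h.surveyed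
  cases h
  rcases hmoves with ⟨_, hρ, rfl, rfl⟩ | ⟨_, _, hρ, rfl, rfl⟩ | ⟨_, hρ, rfl, rfl⟩
  · left
    constructor
    any_goals grind [move_stage_apply]
    exact fun _ => surveyed_move_of_count_eq_one (by grind)
  · left
    constructor
    any_goals grind [move_stage_apply]
    exact fun _ => (hsurveyed (by omega)).move fun _ => .inl rfl
  · right
    have hseen : (c.move X ρ (r + 3) 0).SeenAll X :=
      (hsurveyed (by omega)).seenAll_move (by omega) (by omega)
    constructor
    all_goals grind [move_stage_apply]

theorem Lead.move_right (hr : 4 ≤ r) (h : Lead X Y c)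
    (hnext : twinNext r (c.stage Y) (c.room ρ) = some (k, w)) : Lead X Y (c.move Y ρ k w) := by
  have hpos := @count_pos _ _ c ρ 1
  obtain ⟨hk, rfl⟩ : k ≤ 2 ∧ w = c.room ρ := by
    have := twinNext_of_le_two hr h.stage_right_le hnext
    have := h.count_one
    omega
  have hcount := c.count_move Y ρ k (c.room ρ)
  have htwins : Twins X Y (c.move Y ρ k (c.room ρ)) := h.toTwins.move h.two_lt_right
  have hne := h.right_ne
  have hsurveyed := h.surveyed
  cases h
  constructor
  any_goals grind [move_stage_apply]
  rw [move_stage_of_ne hne.symm]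
  exact fun hstage => (hsurveyed hstage).move fun h2 => .inr h2

theorem Lead.progress (hr : 4 ≤ r) (h : Lead X Y c) :
    ∃ ρ k w, twinNext r (c.stage X) (c.room ρ) = some (k, w) := by
  cases h
  obtain ⟨ρ, hρ⟩ : ∃ ρ, c.room ρ = 0 := exists_room_eq (by omega)
  obtain ⟨ρ', hρ'⟩ : ∃ ρ, c.room ρ = 2 := exists_room_eq (by omega)
  by_cases h3 : c.stage X = 3
  · exact ⟨ρ', 4, 2, by grind [twinNext]⟩
  by_cases hlt : c.stage X < r + 2
  · exact ⟨ρ, c.stage X + 1, 2, by grind [twinNext]⟩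
  · exact ⟨ρ, r + 3, 0, by grind [twinNext]⟩

theorem Signal.move_left (hr : 4 ≤ r) (h : Signal X Y c)
    (hnext : twinNext r (c.stage X) (c.room ρ) = some (k, w)) : Signal X Y (c.move X ρ k w) := by
  obtain ⟨_, hρ, rfl, rfl⟩ := twinNext_of_signaling hr (by have := h.count_one; omega)
    h.stage_left_le hnext
  have hcount := c.count_move X ρ (c.stage X + 1) 1
  have htwins : Twins X Y (c.move X ρ (c.stage X + 1) 1) := h.toTwins.move h.two_lt_left
  have hne := h.right_ne
  cases h
  constructor
  all_goals grind [move_stage_apply, SeenAll.move]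

theorem Signal.move_right (hr : 4 ≤ r) (h : Signal X Y c)
    (hnext : twinNext r (c.stage Y) (c.room ρ) = some (k, w)) :
    Signal X Y (c.move Y ρ k w) ∨ Chase X Y (c.move Y ρ k w) := by
  have hcount := c.count_move Y ρ k w
  have htwins : Twins X Y (c.move Y ρ k w) := h.toTwins.move h.two_lt_right
  have hne := h.right_ne
  obtain ⟨rfl, hmoves⟩ := twinNext_of_le_two hr h.stage_right_le hnext
  cases h
  rcases hmoves with ⟨hk, rfl⟩ | ⟨hk, hρ, rfl⟩
  · left
    constructor
    all_goals grind [move_stage_apply, SeenAll.move]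
  · right
    constructor
    all_goals grind [move_stage_apply, SeenAll.move]

theorem exists_twinNext_of_signaling (hr : 4 ≤ r) (hk : r + 3 ≤ c.stage p) (hk' : c.stage p < r + 5)
    (h2 : 0 < c.count 2) : ∃ ρ k w, twinNext r (c.stage p) (c.room ρ) = some (k, w) := by
  obtain ⟨ρ, hρ⟩ := exists_room_eq h2
  exact ⟨ρ, c.stage p + 1, 1, by grind [twinNext]⟩

theorem Signal.progress (hr : 4 ≤ r) (h : Signal X Y c) :
    (∃ ρ k w, twinNext r (c.stage X) (c.room ρ) = some (k, w)) ∨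
      ∃ ρ k w, twinNext r (c.stage Y) (c.room ρ) = some (k, w) := by
  have hle := h.stage_right_le
  cases h
  by_cases hlt : c.stage X < r + 5
  · exact .inl (exists_twinNext_of_signaling hr (by omega) hlt (by omega))
  · exact .inr (exists_twinNext_of_le_two hle (by omega) (by omega) (by omega))

theorem Chase.move_left (hr : 4 ≤ r) (h : Chase X Y c)
    (hnext : twinNext r (c.stage X) (c.room ρ) = some (k, w)) : Chase X Y (c.move X ρ k w) := by
  obtain ⟨_, hρ, rfl, rfl⟩ := twinNext_of_signaling hr (by have := h.count_one; omega)
    h.stage_left_le hnext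
  have hcount := c.count_move X ρ (c.stage X + 1) 1
  have htwins : Twins X Y (c.move X ρ (c.stage X + 1) 1) := h.toTwins.move h.two_lt_left
  have hne := h.right_ne
  cases h
  constructor
  all_goals grind [move_stage_apply, SeenAll.move]

theorem Chase.move_right (hr : 4 ≤ r) (h : Chase X Y c)
    (hnext : twinNext r (c.stage Y) (c.room ρ) = some (k, w)) :
    Chase X Y (c.move Y ρ k w) ∨ Finish X Y (c.move Y ρ k w) := by
  have hpos := @count_pos _ _ c ρ
  have hmoves : c.stage Y = 3 ∧ c.room ρ = 2 ∧ k = 4 ∧ w = 2 ∨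
      4 ≤ c.stage Y ∧ c.stage Y < 6 ∧ c.room ρ = 0 ∧ k = c.stage Y + 1 ∧ w = 2 ∨
      c.room ρ = 1 ∧ k = 3 * r + 1 ∧ w = 1 := by
    cases h
    have := @hpos 0
    grind (splits := 20) [twinNext]
  have hcount := c.count_move Y ρ k w
  have htwins : Twins X Y (c.move Y ρ k w) := h.toTwins.move h.two_lt_right
  have hne := h.right_ne
  have hseen := h.seenAll_left
  cases h
  rcases hmoves with ⟨_, hρ, rfl, rfl⟩ | ⟨_, _, hρ, rfl, rfl⟩ | ⟨hρ, rfl, rfl⟩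
  · left
    constructor
    all_goals grind [move_stage_apply, SeenAll.move]
  · left
    constructor
    all_goals grind [move_stage_apply, SeenAll.move]
  · right
    have := hpos hρ
    constructor
    any_goals grind [move_stage_apply, SeenAll.move]
    exact surveyed_move_of_count_eq_one (by grind)

theorem Chase.progress (hr : 4 ≤ r) (h : Chase X Y c) :
    (∃ ρ k w, twinNext r (c.stage X) (c.room ρ) = some (k, w)) ∨
      ∃ ρ k w, twinNext r (c.stage Y) (c.room ρ) = some (k, w) := by
  cases h
  by_cases hlt : c.stage X < r + 5
  · exact .inl (exists_twinNext_of_signaling hr (by omega) hlt (by omega))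
  · obtain ⟨ρ, hρ⟩ : ∃ ρ, c.room ρ = 1 := exists_room_eq (by omega)
    exact .inr ⟨ρ, 3 * r + 1, 1, by grind [twinNext]⟩

theorem Finish.move_right (hr : 4 ≤ r) (h : Finish X Y c)
    (hnext : twinNext r (c.stage Y) (c.room ρ) = some (k, w)) : Finish X Y (c.move Y ρ k w) := by
  have hcount_one := h.count_one
  have hpos := h.count_one_pos
  obtain ⟨_, hρ, rfl, rfl⟩ :
      c.stage Y < 4 * r ∧ c.room ρ ≠ 1 ∧ k = c.stage Y + 1 ∧ w = 1 := by
    grind (splits := 20) [twinNext]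
  have hcount := c.count_move Y ρ (c.stage Y + 1) 1
  have htwins : Twins X Y (c.move Y ρ (c.stage Y + 1) 1) := h.toTwins.move h.two_lt_right
  have hsurveyed := h.surveyed
  have hne := h.right_ne
  cases h
  constructor
  any_goals grind [move_stage_apply, SeenAll.move]
  exact hsurveyed.move fun _ => .inl rfl

theorem Finish.progress (hr : 4 ≤ r) (h : Finish X Y c) (hY : c.stage Y ≠ 4 * r) :
    ∃ ρ k w, twinNext r (c.stage Y) (c.room ρ) = some (k, w) := by
  cases h
  obtain ⟨ρ, hρ⟩ : ∃ ρ, c.room ρ ≠ 1 := exists_room_ne (by omega)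
  exact ⟨ρ, c.stage Y + 1, 1, by grind [twinNext]⟩

/-- The last phases of the protocol, from the race of the twins on. -/
inductive TwinPhase (X Y : Fin 5) (c : Config 5 r) : Prop
  | race (h : Race X Y c)
  | lead (h : Lead X Y c)
  | signal (h : Signal X Y c)
  | chase (h : Chase X Y c)
  | finish (h : Finish X Y c)

theorem TwinPhase.twins (h : TwinPhase X Y c) : Twins X Y c := by
  cases h with
  | race h | lead h | signal h | chase h | finish h => exact h.toTwins

theorem TwinPhase.move_left (hr : 4 ≤ r) (h : TwinPhase X Y c)
    (hnext : twinNext r (c.stage X) (c.room ρ) = some (k, w)) :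
    TwinPhase X Y (c.move X ρ k w) := by
  cases h with
  | race h => exact (h.move_left hr hnext).elim .race .lead
  | lead h => exact (h.move_left hr hnext).elim .lead .signal
  | signal h => exact .signal (h.move_left hr hnext)
  | chase h => exact .chase (h.move_left hr hnext)
  | finish h =>
    have hlt := (twinNext_of_signaling hr (by have := h.stage_left; omega) h.stage_left.le hnext).1
    exact absurd h.stage_left hlt.ne

theorem TwinPhase.move_right (hr : 4 ≤ r) (h : TwinPhase X Y c)
    (hnext : twinNext r (c.stage Y) (c.room ρ) = some (k, w)) :
    TwinPhase X Y (c.move Y ρ k w) ∨ TwinPhase Y X (c.move Y ρ k w) := by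
  cases h with
  | race h => exact .inr (TwinPhase.race h.symm |>.move_left hr hnext)
  | lead h => exact .inl (.lead (h.move_right hr hnext))
  | signal h => exact .inl ((h.move_right hr hnext).elim .signal .chase)
  | chase h => exact .inl ((h.move_right hr hnext).elim .chase .finish)
  | finish h => exact .inl (.finish (h.move_right hr hnext))

theorem TwinPhase.move (hr : 4 ≤ r) (h : TwinPhase X Y c)
    (hnext : manyNext r p (c.stage p) (c.room ρ) = some (k, w)) :
    TwinPhase X Y (c.move p ρ k w) ∨ TwinPhase Y X (c.move p ρ k w) := by
  rcases h.twins.eq_or_eq_of_manyNext hnext with rfl | rfl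
  · rw [manyNext_of_two_lt h.twins.two_lt_left] at hnext
    exact .inl (h.move_left hr hnext)
  · rw [manyNext_of_two_lt h.twins.two_lt_right] at hnext
    exact h.move_right hr hnext

theorem TwinPhase.progress (hr : 4 ≤ r) (h : TwinPhase X Y c) : (∃ p, c.stage p = 4 * r) ∨
    ∃ p ρ k w, manyNext r p (c.stage p) (c.room ρ) = some (k, w) := by
  suffices hXY : c.stage Y = 4 * r ∨ (∃ ρ k w, twinNext r (c.stage X) (c.room ρ) = some (k, w)) ∨
      ∃ ρ k w, twinNext r (c.stage Y) (c.room ρ) = some (k, w) by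
    refine hXY.imp (fun hY => ⟨Y, hY⟩) fun hXY => ?_
    rcases hXY with ⟨ρ, k, w, hnext⟩ | ⟨ρ, k, w, hnext⟩
    · exact ⟨X, ρ, k, w, by rw [manyNext_of_two_lt h.twins.two_lt_left, hnext]⟩
    · exact ⟨Y, ρ, k, w, by rw [manyNext_of_two_lt h.twins.two_lt_right, hnext]⟩
  cases h with
  | race h => exact .inr (.inl (h.progress hr))
  | lead h => exact .inr (.inl (h.progress hr))
  | signal h => exact .inr (h.progress hr)
  | chase h => exact .inr (h.progress hr)
  | finish h => exact or_iff_not_imp_left.mpr fun hY => .inr (h.progress hr hY)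

theorem Twins.eq_or_eq_of_stage (hr : 4 ≤ r) (h : Twins X Y c) (hp : c.stage p = 4 * r) :
    p = X ∨ p = Y := by
  cases h
  match p, hp with
  | 0, hp | 1, hp | 2, hp => omega
  | 3, _ | 4, _ => omega

theorem TwinPhase.finish_of_final (hr : 4 ≤ r) (h : TwinPhase X Y c) (hp : c.stage p = 4 * r) :
    Finish X Y c ∧ c.stage Y = 4 * r := by
  have hpXY := h.twins.eq_or_eq_of_stage hr hp
  cases h with
  | race h =>
    have hX := h.stage_left_le
    have hY := h.stage_right_le
    rcases hpXY with rfl | rfl <;> omega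
  | lead h =>
    have hX := h.stage_left_le
    have hY := h.stage_right_le
    rcases hpXY with rfl | rfl <;> omega
  | signal h =>
    have hX := h.stage_left_le
    have hY := h.stage_right_le
    rcases hpXY with rfl | rfl <;> omega
  | chase h =>
    have hX := h.stage_left_le
    have hY := h.stage_right_le
    rcases hpXY with rfl | rfl <;> omega
  | finish h =>
    have hX := h.stage_left
    rcases hpXY with rfl | rfl
    · omega
    · exact ⟨h, hp⟩

theorem TwinPhase.seenAll (hr : 4 ≤ r) (h : TwinPhase X Y c) (hp : c.stage p = 4 * r) (p' : Fin 5) :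
    c.SeenAll p' := by
  obtain ⟨hfinish, hY⟩ := h.finish_of_final hr hp
  have hcount : c.count 1 = r := by
    have := hfinish.count_one
    omega
  exact hfinish.toTwins.seenAll hfinish.seenAll_left (hfinish.surveyed.seenAll hcount) p'

end Twins

/-- The phases of the protocol for at least four rooms. -/
inductive Phase (c : Config 5 r) : Prop
  | opening (h : Opening c)
  | second (h : SecondPhase c)
  | third (h : ThirdPhase c)
  | twins {X Y : Fin 5} (h : TwinPhase X Y c)

theorem Opening.eq_zero_of_manyNext (hr : 4 ≤ r) (h : Opening c)
    (hnext : manyNext r p (c.stage p) (c.room ρ) = some (k, w)) : p = 0 := by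
  by_contra hp
  have hpos := @count_pos _ _ c ρ 2
  have hcount := h.count_two
  rw [h.stage_eq_zero hp] at hnext
  obtain rfl | h1 : p = 1 ∨ 1 < p := by omega
  · change secondNext r 0 (c.room ρ) = some (k, w) at hnext
    grind [secondNext]
  · have := manyNext_of_le_one hr h1 zero_le_one hnext
    omega

theorem Phase.move (hr : 4 ≤ r) (h : Phase c)
    (hnext : manyNext r p (c.stage p) (c.room ρ) = some (k, w)) : Phase (c.move p ρ k w) := by
  cases h with
  | opening h =>
    obtain rfl := h.eq_zero_of_manyNext hr hnext
    exact (h.move hnext).elim .opening fun h => .second h.secondPhase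
  | second h =>
    obtain rfl | rfl | hp : p = 0 ∨ p = 1 ∨ 1 < p := by omega
    · simp [h.stage_zero, manyNext_zero_eq_none] at hnext
    · exact (h.move_one hr hnext).elim .second .third
    · exact .second (h.move_of_one_lt hr hp hnext)
  | third h =>
    obtain rfl | rfl | rfl | hp : p = 0 ∨ p = 1 ∨ p = 2 ∨ 2 < p := by omega
    · simp [h.stage_zero, manyNext_zero_eq_none] at hnext
    · simp [h.stage_one, manyNext_one_eq_none] at hnext
    · exact (h.move_two hr hnext).elim .third fun h => .twins (.race h)
    · exact .third (h.move_of_two_lt hr hp hnext)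
  | twins h => exact (h.move hr hnext).elim .twins .twins

theorem Phase.seenAll (hr : 4 ≤ r) (h : Phase c) (hp : c.stage p = 4 * r) (p' : Fin 5) :
    c.SeenAll p' := by
  cases h with
  | opening h =>
    have hzero := h.stage_zero_le
    have hstage := @h.stage_eq_zero p
    grind
  | second h =>
    obtain rfl | rfl | h1 : p = 0 ∨ p = 1 ∨ 1 < p := by omega
    · have := h.stage_zero
      omega
    · have := h.stage_one_le
      omega
    · have := h.stage_le h1
      omega
  | third h =>
    obtain rfl | rfl | rfl | h2 : p = 0 ∨ p = 1 ∨ p = 2 ∨ 2 < p := by omega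
    · have := h.stage_zero
      omega
    · have := h.stage_one
      omega
    · have := h.stage_two_le
      omega
    · have := h.stage_le h2
      omega
  | twins h => exact h.seenAll hr hp p'

theorem Phase.progress (hr : 4 ≤ r) (h : Phase c) : (∃ p, c.stage p = 4 * r) ∨
    ∃ p ρ k w, manyNext r p (c.stage p) (c.room ρ) = some (k, w) := by
  cases h with
  | opening h => exact .inr ⟨0, h.progress (by omega)⟩
  | second h => exact .inr ⟨1, h.progress⟩
  | third h => exact .inr ⟨2, h.progress hr⟩
  | twins h => exact h.progress hr

theorem manyRooms_invariant (hr : 4 ≤ r) : (manyRooms hr).Invariant (Phase (r := r)) where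
  init := .opening opening_init
  move h hnext := h.move hr hnext
  seenAll h hp := h.seenAll hr hp
  progress h := h.progress hr

theorem hasWinningStrategy_five_of_four_le_rooms (hr : 4 ≤ r) {q : ℕ} (hq : 3 ≤ q) :
    HasWinningStrategy 5 r q :=
  (manyRooms_invariant hr).hasWinningStrategy hq

end ManyRooms

end PrisonersGame

open PrisonersGame in
/-- Five prisoners have a winning strategy for any number of states `q ≥ 3`
and any number of rooms `r ≥ 1` with `r ≠ 3`. -/
theorem winning_strategy_five (r q : ℕ) (hr : 1 ≤ r) (hr3 : r ≠ 3)
    (hq : 3 ≤ q) : HasWinningStrategy 5 r q := by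
  rcases (by omega : r ≤ 2 ∨ 4 ≤ r) with hr2 | hr4
  · exact hasWinningStrategy_of_rooms_le_two hr hr2 hq
  · exact hasWinningStrategy_five_of_four_le_rooms hr4 hq
end
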